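/- arXiv:1312.3679 — 3 statements merged into one kernel-verified Lean document; each statement's English description precedes it below -/
import Mathlib

section
/- Let D be a semisimple x-monotone drawing of K_4. Then at most one unordered pair of edges of D crosses an odd number of times (ocr(D) ≤ 1), and ocr(D) + E_1(D) = 3; that is, D has exactly three 1-edges if ocr(D) = 0 and exactly two 1-edges if ocr(D) = 1. -/
/-- `Zval n` is Hill's conjectured value
`Z(n) = (1/4)⌊n/2⌋⌊(n−1)/2⌋⌊(n−2)/2⌋⌊(n−3)/2⌋` for the crossing number of `K n`.
(The product of the four floors is always divisible by 4, so natural division is exact.) -/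
def Zval (n : ℕ) : ℕ :=
  n / 2 * ((n - 1) / 2) * ((n - 2) / 2) * ((n - 3) / 2) / 4

/-- An x-monotone drawing of the complete graph `K n`: vertices `v i = (x i, 0)` with
`x` strictly increasing, and for each pair `i < j` a continuous function `e i j` on
`[x i, x j]` vanishing at the endpoints, whose graph is the arc of the edge `{i, j}`.
Edges avoid the intermediate vertices, any two distinct edges meet in finitely many
interior parameters, and at each such common point the difference changes sign
(a proper crossing). -/
structure XMonotoneDrawing (n : ℕ) where
  x : Fin n → ℝ
  x_strictMono : StrictMono x
  e : Fin n → Fin n → ℝ → ℝ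
  cont : ∀ i j : Fin n, i < j → ContinuousOn (e i j) (Set.Icc (x i) (x j))
  end_left : ∀ i j : Fin n, i < j → e i j (x i) = 0
  end_right : ∀ i j : Fin n, i < j → e i j (x j) = 0
  avoid_vertex : ∀ i m j : Fin n, i < m → m < j → e i j (x m) ≠ 0
  cross_finite : ∀ i j k l : Fin n, i < j → k < l → (i, j) ≠ (k, l) →
    {t : ℝ | max (x i) (x k) < t ∧ t < min (x j) (x l) ∧ e i j t = e k l t}.Finite
  sign_change : ∀ i j k l : Fin n, i < j → k < l → (i, j) ≠ (k, l) →
    ∀ t : ℝ, max (x i) (x k) < t → t < min (x j) (x l) → e i j t = e k l t →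
      ∃ ε > (0 : ℝ), ∀ s : ℝ, max (x i) (x k) < s → t - ε < s → s < t →
        ∀ u : ℝ, u < min (x j) (x l) → t < u → u < t + ε →
          (e i j s - e k l s) * (e i j u - e k l u) < 0

namespace XMonotoneDrawing

variable {n : ℕ}

/-- The set of parameters at which the edges `{i,j}` and `{k,l}` cross
(both edges are parametrized over the `x`-axis). -/
def crossSet (D : XMonotoneDrawing n) (i j k l : Fin n) : Set ℝ :=
  {t : ℝ | max (D.x i) (D.x k) < t ∧ t < min (D.x j) (D.x l) ∧ D.e i j t = D.e k l t}

/-- The number of crossings between the edges `{i,j}` and `{k,l}`. -/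
noncomputable def crossCount (D : XMonotoneDrawing n) (i j k l : Fin n) : ℕ :=
  (D.crossSet i j k l).ncard

/-- Two edges `{i,j}` and `{k,l}` are adjacent if they share an endpoint index. -/
def Adj (i j k l : Fin n) : Prop := i = k ∨ i = l ∨ j = k ∨ j = l

/-- A drawing is semisimple if no two adjacent edges cross. -/
def Semisimple (D : XMonotoneDrawing n) : Prop :=
  ∀ i j k l : Fin n, i < j → k < l → (i, j) ≠ (k, l) → Adj i j k l →
    D.crossCount i j k l = 0

/-- A drawing is weakly semisimple if every two adjacent edges cross an even
number of times. -/
def WeaklySemisimple (D : XMonotoneDrawing n) : Prop :=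
  ∀ i j k l : Fin n, i < j → k < l → (i, j) ≠ (k, l) → Adj i j k l →
    Even (D.crossCount i j k l)

/-- A drawing is simple if no two adjacent edges cross and every two non-adjacent
edges cross at most once. -/
def Simple (D : XMonotoneDrawing n) : Prop :=
  ∀ i j k l : Fin n, i < j → k < l → (i, j) ≠ (k, l) →
    (Adj i j k l → D.crossCount i j k l = 0) ∧
    (¬ Adj i j k l → D.crossCount i j k l ≤ 1)

/-- `cr D`: the total number of crossings of `D`. (Each unordered pair of distinct
edges is counted twice in the sum, whence the division by 2; `crossCount` is
symmetric in the two edges.) -/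
noncomputable def cr (D : XMonotoneDrawing n) : ℕ :=
  (∑ p : (Fin n × Fin n) × (Fin n × Fin n),
      if p.1.1 < p.1.2 ∧ p.2.1 < p.2.2 ∧ p.1 ≠ p.2 then
        D.crossCount p.1.1 p.1.2 p.2.1 p.2.2
      else 0) / 2

/-- `ocr D`: the number of unordered pairs of edges of `D` crossing an odd number
of times. (Each unordered pair appears twice as an ordered pair.) -/
noncomputable def ocr (D : XMonotoneDrawing n) : ℕ :=
  {p : (Fin n × Fin n) × (Fin n × Fin n) |
    p.1.1 < p.1.2 ∧ p.2.1 < p.2.2 ∧ p.1 ≠ p.2 ∧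
      Odd (D.crossCount p.1.1 p.1.2 p.2.1 p.2.2)}.ncard / 2

/-- The signature of the triple `i < j < k`: `true` (i.e. `+`) if the vertex `v j`
lies below the edge `{i, k}`, i.e. `e i k (x j) > 0`, and `false` (i.e. `−`) otherwise. -/
noncomputable def sig (D : XMonotoneDrawing n) (i j k : Fin n) : Bool :=
  if 0 < D.e i k (D.x j) then true else false

/-- `D` realizes the signature function `σ` if `σ_D` and `σ` agree on all
increasing triples. -/
def Realizes (D : XMonotoneDrawing n) (σ : Fin n → Fin n → Fin n → Bool) : Prop :=
  ∀ i j k : Fin n, i < j → j < k → D.sig i j k = σ i j k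

/-- A drawing is pseudolinear if its edges extend to continuous curves over all of `ℝ`
that avoid all vertices other than their endpoints and such that any two of these
extended curves cross exactly once (the crossing being a sign change of the difference). -/
def Pseudolinear (D : XMonotoneDrawing n) : Prop :=
  ∃ p : Fin n → Fin n → ℝ → ℝ,
    (∀ i j : Fin n, i < j → Continuous (p i j)) ∧
    (∀ i j : Fin n, i < j → ∀ t ∈ Set.Icc (D.x i) (D.x j), p i j t = D.e i j t) ∧
    (∀ i j m : Fin n, i < j → m ≠ i → m ≠ j → p i j (D.x m) ≠ 0) ∧
    (∀ i j k l : Fin n, i < j → k < l → (i, j) ≠ (k, l) →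
      ∃ t : ℝ, p i j t = p k l t ∧
        ∀ s u : ℝ, s < t → t < u →
          (p i j s - p k l s) * (p i j u - p k l u) < 0)

/-- The arc of the edge `{i, j}` as a subset of the plane `ℝ × ℝ`. -/
def edgeArc (D : XMonotoneDrawing n) (i j : Fin n) : Set (ℝ × ℝ) :=
  {q : ℝ × ℝ | D.x i ≤ q.1 ∧ q.1 ≤ D.x j ∧ q.2 = D.e i j q.1}

/-- The union of all edge arcs of the drawing. -/
def arcUnion (D : XMonotoneDrawing n) : Set (ℝ × ℝ) :=
  ⋃ i : Fin n, ⋃ j : Fin n, ⋃ (_ : i < j), D.edgeArc i j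

end XMonotoneDrawing

namespace Sig

variable {n : ℕ}

/-- With respect to a signature function `σ`, the vertex `m ∉ {i, j}` is on the left of
the directed edge `(i, j)` (where `i < j`). -/
def LeftOf (σ : Fin n → Fin n → Fin n → Bool) (i j m : Fin n) : Prop :=
  (i < m ∧ m < j ∧ σ i m j = false) ∨ (m < i ∧ σ m i j = true) ∨ (j < m ∧ σ i j m = true)

/-- The number of vertices on the left of the directed edge `(i, j)`. -/
noncomputable def leftCount (σ : Fin n → Fin n → Fin n → Bool) (i j : Fin n) : ℕ :=
  {m : Fin n | LeftOf σ i j m}.ncard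

/-- The edge `{i, j}` (with `i < j`) is a `k`-edge of `σ` if `min(ℓ, n − 2 − ℓ) = k`,
where `ℓ` is the number of vertices on its left. -/
def IsKEdge (σ : Fin n → Fin n → Fin n → Bool) (k : ℕ) (i j : Fin n) : Prop :=
  min (leftCount σ i j) (n - 2 - leftCount σ i j) = k

/-- `Ek σ k`: the number of `k`-edges of `σ`. -/
noncomputable def Ek (σ : Fin n → Fin n → Fin n → Bool) (k : ℕ) : ℕ :=
  {p : Fin n × Fin n | p.1 < p.2 ∧ IsKEdge σ k p.1 p.2}.ncard

/-- `Ele σ k = E_{≤k}(σ)`: the number of `≤k`-edges of `σ`. -/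
noncomputable def Ele (σ : Fin n → Fin n → Fin n → Bool) (k : ℕ) : ℕ :=
  ∑ i ∈ Finset.range (k + 1), Ek σ i

/-- `Elele σ k = E_{≤≤k}(σ) = Σ_{j=0}^{k} E_{≤j}(σ)`. -/
noncomputable def Elele (σ : Fin n → Fin n → Fin n → Bool) (k : ℕ) : ℕ :=
  ∑ j ∈ Finset.range (k + 1), Ele σ j

/-- `E_{≤≤k}` with an integer index, which vanishes for negative `k`. -/
noncomputable def ElelZ (σ : Fin n → Fin n → Fin n → Bool) (k : ℤ) : ℕ :=
  if 0 ≤ k then Elele σ k.toNat else 0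

/-- The left count of the edge `{i, j}` in the drawing restricted to the first
`n − 1` vertices (the last vertex deleted). -/
noncomputable def leftCountRes (σ : Fin n → Fin n → Fin n → Bool) (i j : Fin n) : ℕ :=
  {m : Fin n | LeftOf σ i j m ∧ (m : ℕ) + 1 < n}.ncard

/-- The edge `{i, j}` is a `k`-edge of the restriction of `σ` to the first `n − 1`
vertices (there `min(ℓ', (n−1) − 2 − ℓ') = k`). -/
def IsKEdgeRes (σ : Fin n → Fin n → Fin n → Bool) (k : ℕ) (i j : Fin n) : Prop :=
  min (leftCountRes σ i j) (n - 3 - leftCountRes σ i j) = k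

/-- The edge `{i, j}` is a `(D,D')`-invariant `≤k`-edge: it avoids the last vertex and
is an `m`-edge with `m ≤ k` both in `σ` and in the restriction of `σ` to the first
`n − 1` vertices. -/
def InvariantLeK (σ : Fin n → Fin n → Fin n → Bool) (k : ℕ) (i j : Fin n) : Prop :=
  (j : ℕ) + 1 < n ∧ (∃ m ≤ k, IsKEdge σ m i j) ∧ (∃ m ≤ k, IsKEdgeRes σ m i j)

/-- The ten 4-tuple forms allowed in signature functions of semisimple x-monotone
drawings: `++++, −−−−, ++−−, −−++, −++−, +−−+, −−−+, +++−, +−−−, −+++`. -/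
def AllowedForm (a b c d : Bool) : Prop :=
  (a, b, c, d) ∈ ([(true, true, true, true), (false, false, false, false),
    (true, true, false, false), (false, false, true, true),
    (false, true, true, false), (true, false, false, true),
    (false, false, false, true), (true, true, true, false),
    (true, false, false, false), (false, true, true, true)] :
      List (Bool × Bool × Bool × Bool))

/-- A signature function is admissible if every increasing 4-tuple is of one of the
ten allowed forms. -/
def Admissible (σ : Fin n → Fin n → Fin n → Bool) : Prop :=
  ∀ a b c d : Fin n, a < b → b < c → c < d →
    AllowedForm (σ a b c) (σ a b d) (σ a c d) (σ b c d)

/-- The six convex forms: `++++, −−−−, ++−−, −−++, −++−, +−−+`. -/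
def ConvexForm (a b c d : Bool) : Prop :=
  (a, b, c, d) ∈ ([(true, true, true, true), (false, false, false, false),
    (true, true, false, false), (false, false, true, true),
    (false, true, true, false), (true, false, false, true)] :
      List (Bool × Bool × Bool × Bool))

/-- The 4-tuple `a < b < c < d` is convex in `σ`. -/
def Convex4 (σ : Fin n → Fin n → Fin n → Bool) (a b c d : Fin n) : Prop :=
  ConvexForm (σ a b c) (σ a b d) (σ a c d) (σ b c d)

/-- The eight 4-tuple forms of pseudolinear x-monotone drawings (the sign-monotone
sequences): `++++, +++−, ++−−, +−−−, −−−−, −−−+, −−++, −+++`. -/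
def PLForm (a b c d : Bool) : Prop :=
  (a, b, c, d) ∈ ([(true, true, true, true), (true, true, true, false),
    (true, true, false, false), (true, false, false, false),
    (false, false, false, false), (false, false, false, true),
    (false, false, true, true), (false, true, true, true)] :
      List (Bool × Bool × Bool × Bool))

/-- The relation `j ⋖ k` on `{j : i < j}`: `j ⋖ k` iff (`j < k` and `σ i j k = +`)
or (`k < j` and `σ i k j = −`). -/
def Below (σ : Fin n → Fin n → Fin n → Bool) (i j k : Fin n) : Prop :=
  (j < k ∧ σ i j k = true) ∨ (k < j ∧ σ i k j = false)

end Sig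

/-- A continuous function without zeros in the open interval and nonzero at its endpoints has
the same sign at both endpoints. -/
theorem mul_pos_of_forall_Ioo_ne_zero {f : ℝ → ℝ} {a b : ℝ} (hab : a ≤ b)
    (hf : ContinuousOn f (Set.Icc a b)) (ha : f a ≠ 0) (hb : f b ≠ 0)
    (h : ∀ t, a < t → t < b → f t ≠ 0) : 0 < f a * f b := by
  by_contra hneg
  have hz : (0 : ℝ) ∈ Set.uIcc (f a) (f b) := by
    rw [Set.mem_uIcc]
    by_contra hcon
    push Not at hcon
    rcases lt_or_gt_of_ne ha with h1 | h1 <;> rcases lt_or_gt_of_ne hb with h2 | h2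
    · exact hneg (mul_pos_of_neg_of_neg h1 h2)
    · exact absurd (hcon.1 h1.le) (not_lt.mpr h2.le)
    · exact absurd (hcon.2 h2.le) (not_lt.mpr h1.le)
    · exact hneg (mul_pos h1 h2)
  rw [← Set.uIcc_of_le hab] at hf
  obtain ⟨t, ht, h0⟩ := intermediate_value_uIcc hf hz
  rw [Set.uIcc_of_le hab] at ht
  rcases ht.1.eq_or_lt with rfl | h1
  · exact ha h0
  rcases ht.2.eq_or_lt with rfl | h2
  · exact hb h0
  exact h t h1 h2 h0

/-- If a continuous function changes sign at each of its finitely many zeros in `(a, b)`, then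
the number of these zeros is odd iff the signs at the endpoints differ. -/
theorem odd_ncard_zeros_iff_mul_neg {f : ℝ → ℝ} {a b : ℝ} (hab : a < b)
    (hf : ContinuousOn f (Set.Icc a b)) (ha : f a ≠ 0) (hb : f b ≠ 0)
    (hfin : {t | a < t ∧ t < b ∧ f t = 0}.Finite)
    (hsign : ∀ t, a < t → t < b → f t = 0 → ∃ ε > (0 : ℝ), ∀ s, a < s → t - ε < s → s < t →
      ∀ u, u < b → t < u → u < t + ε → f s * f u < 0) :
    Odd {t | a < t ∧ t < b ∧ f t = 0}.ncard ↔ f a * f b < 0 := by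
  induction hn : {t | a < t ∧ t < b ∧ f t = 0}.ncard generalizing a with
  | zero =>
    have hempty := (Set.ncard_eq_zero hfin).mp hn
    have hpos := mul_pos_of_forall_Ioo_ne_zero hab.le hf ha hb fun t h1 h2 h0 =>
      (hempty.subset ⟨h1, h2, h0⟩ : t ∈ (∅ : Set ℝ))
    simpa using hpos.le
  | succ n ih =>
    have hne : {t | a < t ∧ t < b ∧ f t = 0}.Nonempty := by
      rw [← Set.ncard_pos hfin]; omega
    obtain ⟨t, ⟨hat, htb, ht0⟩, hmin⟩ := Set.exists_min_image _ id hfin hne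
    obtain ⟨ε, hε, hch⟩ := hsign t hat htb ht0
    obtain ⟨δ, hδ, hball⟩ := Metric.isOpen_iff.mp
      (hfin.subset (Set.sdiff_subset (t := {t}))).isClosed.isOpen_compl t (by simp)
    have hiso : ∀ y, t < y → y < t + δ → y < b → f y ≠ 0 := by
      intro y h1 h2 h3 h0
      have hy : y ∈ Metric.ball t δ := by
        rw [Metric.mem_ball, Real.dist_eq, abs_lt]; constructor <;> linarith
      exact hball hy ⟨⟨hat.trans h1, h3, h0⟩, h1.ne'⟩
    obtain ⟨s, hs, hst⟩ := exists_between (max_lt hat (sub_lt_self t hε))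
    obtain ⟨u, htu, hu⟩ := exists_between
      (lt_min htb (lt_min (lt_add_of_pos_right t hε) (lt_add_of_pos_right t hδ)))
    simp only [max_lt_iff, lt_min_iff] at hs hu
    have hsu := hch s hs.1 hs.2 hst u hu.1 htu hu.2.1
    have hs0 : f s ≠ 0 := fun h => by simp [h] at hsu
    have hu0 : f u ≠ 0 := fun h => by simp [h] at hsu
    have has := mul_pos_of_forall_Ioo_ne_zero hs.1.le
      (hf.mono (Set.Icc_subset_Icc_right (by linarith))) ha hs0
      fun y h1 h2 h0 => absurd (hmin y ⟨h1, by linarith, h0⟩) (by simp only [id]; linarith)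
    have hset : {y | u < y ∧ y < b ∧ f y = 0} = {y | a < y ∧ y < b ∧ f y = 0} \ {t} := by
      ext y
      simp only [Set.mem_ofPred_eq, Set.mem_sdiff, Set.mem_singleton_iff]
      constructor
      · rintro ⟨h1, h2, h3⟩
        exact ⟨⟨by linarith, h2, h3⟩, by linarith⟩
      · rintro ⟨⟨h1, h2, h3⟩, h4⟩
        refine ⟨?_, h2, h3⟩
        have hty : t < y := lt_of_le_of_ne (hmin y ⟨h1, h2, h3⟩) (Ne.symm h4)
        by_contra hle
        exact hiso y hty (by linarith) h2 h3
    have htmem : t ∈ {y | a < y ∧ y < b ∧ f y = 0} := ⟨hat, htb, ht0⟩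
    have hcard : {y | u < y ∧ y < b ∧ f y = 0}.ncard = n := by
      rw [hset, Set.ncard_sdiff_singleton_of_mem htmem, hn, Nat.add_sub_cancel]
    have hau : a < u := by linarith
    have key := ih hu.1 (hf.mono (Set.Icc_subset_Icc_left hau.le)) hu0
      (hset ▸ hfin.subset Set.sdiff_subset)
      (fun y h1 h2 h3 => by
        obtain ⟨η, hη, hy⟩ := hsign y (hau.trans h1) h2 h3
        exact ⟨η, hη, fun s hs => hy s (hau.trans hs)⟩) hcard
    rw [Nat.odd_add_one, key]
    have hub : f u * f b ≠ 0 := mul_ne_zero hu0 hb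
    have hss : 0 < (f s * f s) * (f u * f u) :=
      mul_pos (mul_self_pos.mpr hs0) (mul_self_pos.mpr hu0)
    have hprod : f a * f b * ((f s * f s) * (f u * f u)) =
        (f a * f s) * (f s * f u) * (f u * f b) := by ring
    have hasu := mul_neg_of_pos_of_neg has hsu
    constructor
    · intro h
      have hpos := lt_of_le_of_ne (not_lt.mp h) hub.symm
      exact neg_of_mul_neg_left (hprod ▸ mul_neg_of_neg_of_pos hasu hpos) hss.le
    · intro h hneg
      exact (mul_neg_of_neg_of_pos h hss).not_gt (hprod ▸ mul_pos_of_neg_of_neg hasu hneg)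

namespace XMonotoneDrawing

variable {n : ℕ} (D : XMonotoneDrawing n)

theorem crossCount_comm (i j k l : Fin n) : D.crossCount i j k l = D.crossCount k l i j := by
  simp only [crossCount, crossSet, max_comm (D.x i), min_comm (D.x j), eq_comm (a := D.e i j _)]

theorem sig_eq_true_iff {i j k : Fin n} : D.sig i j k = true ↔ 0 < D.e i k (D.x j) := by
  simp [sig]

theorem sig_eq_false_iff {i j k : Fin n} (hij : i < j) (hjk : j < k) :
    D.sig i j k = false ↔ D.e i k (D.x j) < 0 := by
  rw [← Bool.not_eq_true, sig_eq_true_iff, not_lt]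
  exact ⟨fun h => lt_of_le_of_ne h (D.avoid_vertex i j k hij hjk), le_of_lt⟩

theorem continuousOn_sub {i j k l : Fin n} (hij : i < j) (hkl : k < l) {a b : ℝ}
    (hi : D.x i ≤ a) (hk : D.x k ≤ a) (hj : b ≤ D.x j) (hl : b ≤ D.x l) :
    ContinuousOn (fun t => D.e i j t - D.e k l t) (Set.Icc a b) :=
  ((D.cont i j hij).mono (Set.Icc_subset_Icc hi hj)).sub
    ((D.cont k l hkl).mono (Set.Icc_subset_Icc hk hl))

/-- The parity of the number of crossings of two edges is determined by the signs of their
difference at the two ends of the common domain, if these are nonzero. -/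
theorem odd_crossCount_iff {i j k l p q : Fin n} (hij : i < j) (hkl : k < l)
    (hne : (i, j) ≠ (k, l)) (hp : max (D.x i) (D.x k) = D.x p)
    (hq : min (D.x j) (D.x l) = D.x q) (hpq : p < q)
    (h1 : D.e i j (D.x p) - D.e k l (D.x p) ≠ 0) (h2 : D.e i j (D.x q) - D.e k l (D.x q) ≠ 0) :
    Odd (D.crossCount i j k l) ↔
      (D.e i j (D.x p) - D.e k l (D.x p)) * (D.e i j (D.x q) - D.e k l (D.x q)) < 0 := by
  have hfin := D.cross_finite i j k l hij hkl hne
  have hsign := D.sign_change i j k l hij hkl hne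
  have hcont := D.continuousOn_sub hij hkl (hp ▸ le_max_left _ _) (hp ▸ le_max_right _ _)
    (hq ▸ min_le_left _ _) (hq ▸ min_le_right _ _)
  simp only [crossCount, crossSet]
  simp only [hp, hq, ← sub_eq_zero (a := D.e i j _)] at hfin hsign ⊢
  exact odd_ncard_zeros_iff_mul_neg (D.x_strictMono hpq) hcont h1 h2 hfin hsign

variable {D}

/-- In a semisimple drawing, an edge does not meet an adjacent one in their common domain. -/
theorem Semisimple.ne (hD : D.Semisimple) {i j k l : Fin n} (hij : i < j) (hkl : k < l)
    (hne : (i, j) ≠ (k, l)) (hadj : Adj i j k l) {t : ℝ} (h1 : max (D.x i) (D.x k) < t)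
    (h2 : t < min (D.x j) (D.x l)) : D.e i j t ≠ D.e k l t := by
  intro h
  have h0 := (Set.ncard_eq_zero (D.cross_finite i j k l hij hkl hne)).mp
    (hD i j k l hij hkl hne hadj)
  exact (h0.subset ⟨h1, h2, h⟩ : t ∈ (∅ : Set ℝ))

/-- For `i < j < k < l`, the edges `{i, k}` and `{i, l}` are in the same vertical order at `x j`
and at `x k`. -/
theorem Semisimple.mul_pos_left (hD : D.Semisimple) {i j k l : Fin n} (hij : i < j) (hjk : j < k)
    (hkl : k < l) : 0 < (D.e i l (D.x j) - D.e i k (D.x j)) * D.e i l (D.x k) := by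
  have xij := D.x_strictMono hij
  have xjk := D.x_strictMono hjk
  have xkl := D.x_strictMono hkl
  have hik := hij.trans hjk
  have hne : ∀ t, D.x j ≤ t → t < D.x k → D.e i l t - D.e i k t ≠ 0 := fun t h1 h2 =>
    sub_ne_zero.mpr (hD.ne (hik.trans hkl) hik (by simp [hkl.ne']) (Or.inl rfl)
      (by simpa using xij.trans_le h1) (lt_min (h2.trans xkl) h2))
  have hk := D.avoid_vertex i k l hik hkl
  have h := mul_pos_of_forall_Ioo_ne_zero xjk.le
    (D.continuousOn_sub (hik.trans hkl) hik xij.le xij.le xkl.le le_rfl)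
    (hne _ le_rfl xjk) (by simpa [D.end_right i k hik] using hk) fun t h1 h2 => hne t h1.le h2
  simpa [D.end_right i k hik] using h

/-- For `i < j < k < l`, the edges `{i, l}` and `{j, l}` are in the same vertical order at `x j`
and at `x k`. -/
theorem Semisimple.mul_pos_right (hD : D.Semisimple) {i j k l : Fin n} (hij : i < j) (hjk : j < k)
    (hkl : k < l) : 0 < D.e i l (D.x j) * (D.e i l (D.x k) - D.e j l (D.x k)) := by
  have xij := D.x_strictMono hij
  have xjk := D.x_strictMono hjk
  have xkl := D.x_strictMono hkl
  have hjl := hjk.trans hkl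
  have hne : ∀ t, D.x j < t → t ≤ D.x k → D.e i l t - D.e j l t ≠ 0 := fun t h1 h2 =>
    sub_ne_zero.mpr (hD.ne (hij.trans hjl) hjl (by simp [hij.ne]) (by simp [Adj])
      (max_lt (xij.trans h1) h1) (by simpa using h2.trans_lt xkl))
  have hj := D.avoid_vertex i j l hij hjl
  have h := mul_pos_of_forall_Ioo_ne_zero xjk.le
    (D.continuousOn_sub (hij.trans hjl) hjl xij.le le_rfl xkl.le xkl.le)
    (by simpa [D.end_left j l hjl] using hj) (hne _ xjk le_rfl) fun t h1 h2 => hne t h1 h2.le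
  simpa [D.end_left j l hjl] using h

/-- The signature of a semisimple drawing is admissible. -/
theorem Semisimple.admissible (hD : D.Semisimple) : Sig.Admissible D.sig := by
  intro i j k l hij hjk hkl
  have hl := hD.mul_pos_left hij hjk hkl
  have hr := hD.mul_pos_right hij hjk hkl
  have ha := D.sig_eq_false_iff hij hjk
  have hb := D.sig_eq_false_iff hij (hjk.trans hkl)
  have hc := D.sig_eq_false_iff (hij.trans hjk) hkl
  have hd := D.sig_eq_false_iff hjk hkl
  have ha' := D.sig_eq_true_iff (i := i) (j := j) (k := k)
  have hb' := D.sig_eq_true_iff (i := i) (j := j) (k := l)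
  have hc' := D.sig_eq_true_iff (i := i) (j := k) (k := l)
  have hd' := D.sig_eq_true_iff (i := j) (j := k) (k := l)
  generalize D.sig i j k = a at *
  generalize D.sig i j l = b at *
  generalize D.sig i k l = c at *
  generalize D.sig j k l = d at *
  cases a <;> cases b <;> cases c <;> cases d <;>
    simp only [Sig.AllowedForm, true_iff, reduceCtorEq, false_iff] at * <;>
    first
    | decide
    | (exfalso; nlinarith)

/-- For `i < j < k < l`, the edges `{i, k}` and `{j, l}` cross oddly iff the triples `(i, j, k)`
and `(j, k, l)` have equal signs. -/
theorem odd_crossCount_interleaved_iff {i j k l : Fin n} (hij : i < j) (hjk : j < k)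
    (hkl : k < l) : Odd (D.crossCount i k j l) ↔ D.sig i j k = D.sig j k l := by
  have hik := hij.trans hjk
  have hjl := hjk.trans hkl
  have hj := D.avoid_vertex i j k hij hjk
  have hk := D.avoid_vertex j k l hjk hkl
  have hl0 := D.end_left j l hjl
  have hr0 := D.end_right i k hik
  rw [D.odd_crossCount_iff hik hjl (by simp [hij.ne])
    (max_eq_right (D.x_strictMono hij).le) (min_eq_left (D.x_strictMono hkl).le) hjk
    (by simpa [hl0] using hj) (by simpa [hr0] using hk), hl0, hr0]
  rw [sub_zero, zero_sub, mul_neg, neg_lt_zero]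
  rcases lt_or_gt_of_ne hj with h1 | h1 <;> rcases lt_or_gt_of_ne hk with h2 | h2 <;>
    simp [sig, h1, h2, h1.not_gt, h2.not_gt, mul_pos_iff]

/-- For `i < j < k < l`, the edges `{i, l}` and `{j, k}` cross oddly iff the triples `(i, j, l)`
and `(i, k, l)` have different signs. -/
theorem odd_crossCount_nested_iff {i j k l : Fin n} (hij : i < j) (hjk : j < k)
    (hkl : k < l) : Odd (D.crossCount i l j k) ↔ D.sig i j l ≠ D.sig i k l := by
  have hj := D.avoid_vertex i j l hij (hjk.trans hkl)
  have hk := D.avoid_vertex i k l (hij.trans hjk) hkl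
  have hl0 := D.end_left j k hjk
  have hr0 := D.end_right j k hjk
  rw [D.odd_crossCount_iff (hij.trans (hjk.trans hkl)) hjk (by simp [hij.ne])
    (max_eq_right (D.x_strictMono hij).le) (min_eq_right (D.x_strictMono hkl).le) hjk
    (by simpa [hl0] using hj) (by simpa [hr0] using hk), hl0, hr0]
  rw [sub_zero, sub_zero]
  rcases lt_or_gt_of_ne hj with h1 | h1 <;> rcases lt_or_gt_of_ne hk with h2 | h2 <;>
    simp [sig, h1, h2, h1.not_gt, h2.not_gt, mul_neg_iff]

/-- Edges whose domains do not overlap do not cross. -/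
theorem crossCount_eq_zero_of_le {i j k l : Fin n} (hjk : j ≤ k) : D.crossCount i j k l = 0 := by
  have hx := D.x_strictMono.monotone hjk
  rw [crossCount, show D.crossSet i j k l = ∅ from ?_, Set.ncard_empty]
  refine Set.eq_empty_of_forall_notMem fun t ht => ?_
  have h1 := (max_lt_iff.mp ht.1).2
  have h2 := (lt_min_iff.mp ht.2.1).1
  linarith

/-- In a semisimple drawing of `K 4` only two pairs of edges can cross oddly. -/
theorem Semisimple.ocr_eq {D : XMonotoneDrawing 4} (hD : D.Semisimple) :
    D.ocr = (if D.sig 0 1 2 = D.sig 1 2 3 then 1 else 0) +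
      (if D.sig 0 1 3 ≠ D.sig 0 2 3 then 1 else 0) := by
  have hset : {p : (Fin 4 × Fin 4) × (Fin 4 × Fin 4) | p.1.1 < p.1.2 ∧ p.2.1 < p.2.2 ∧
      p.1 ≠ p.2 ∧ Odd (D.crossCount p.1.1 p.1.2 p.2.1 p.2.2)} =
      ↑((if D.sig 0 1 2 = D.sig 1 2 3 then {((0, 2), (1, 3)), ((1, 3), (0, 2))} else ∅) ∪
        (if D.sig 0 1 3 ≠ D.sig 0 2 3 then {((0, 3), (1, 2)), ((1, 2), (0, 3))} else ∅) :
        Finset ((Fin 4 × Fin 4) × (Fin 4 × Fin 4))) := by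
    have hA := D.odd_crossCount_interleaved_iff (i := 0) (j := 1) (k := 2) (l := 3)
      (by decide) (by decide) (by decide)
    have hB := D.odd_crossCount_nested_iff (i := 0) (j := 1) (k := 2) (l := 3)
      (by decide) (by decide) (by decide)
    have hA' := hA
    have hB' := hB
    rw [crossCount_comm] at hA' hB'
    ext ⟨⟨i, j⟩, ⟨k, l⟩⟩
    have hcases : ∀ i j k l : Fin 4, i < j → k < l →
        (i = k ∨ i = l ∨ j = k ∨ j = l) ∨ j ≤ k ∨ l ≤ i ∨
        ((i, j), (k, l)) ∈ ({((0, 2), (1, 3)), ((1, 3), (0, 2)), ((0, 3), (1, 2)),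
          ((1, 2), (0, 3))} : Finset ((Fin 4 × Fin 4) × (Fin 4 × Fin 4))) := by decide
    constructor
    · rintro ⟨hij, hkl, hne, hodd⟩
      rcases hcases i j k l hij hkl with h | h | h | h
      · simp [hD i j k l hij hkl hne h] at hodd
      · simp [D.crossCount_eq_zero_of_le h] at hodd
      · simp [D.crossCount_comm i j, D.crossCount_eq_zero_of_le h] at hodd
      · simp only [Finset.mem_insert, Finset.mem_singleton, Prod.mk.injEq] at h
        rcases h with ⟨⟨rfl, rfl⟩, rfl, rfl⟩ | ⟨⟨rfl, rfl⟩, rfl, rfl⟩ |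
          ⟨⟨rfl, rfl⟩, rfl, rfl⟩ | ⟨⟨rfl, rfl⟩, rfl, rfl⟩
        · simp [hA.mp hodd]
        · simp [hA'.mp hodd]
        · simp [hB.mp hodd]
        · simp [hB'.mp hodd]
    · intro h
      rw [Finset.mem_coe, Finset.mem_union] at h
      rcases h with h | h <;> split_ifs at h with hs <;>
        simp only [Finset.mem_insert, Finset.mem_singleton, Prod.mk.injEq, Finset.notMem_empty] at h
      · rcases h with ⟨⟨rfl, rfl⟩, rfl, rfl⟩ | ⟨⟨rfl, rfl⟩, rfl, rfl⟩
        · exact ⟨by decide, by decide, by decide, hA.mpr hs⟩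
        · exact ⟨by decide, by decide, by decide, hA'.mpr hs⟩
      · rcases h with ⟨⟨rfl, rfl⟩, rfl, rfl⟩ | ⟨⟨rfl, rfl⟩, rfl, rfl⟩
        · exact ⟨by decide, by decide, by decide, hB.mpr hs⟩
        · exact ⟨by decide, by decide, by decide, hB'.mpr hs⟩
  rw [ocr, hset, Set.ncard_coe_finset]
  split_ifs <;> rfl

end XMonotoneDrawing

namespace Sig

variable {n : ℕ}

instance (σ : Fin n → Fin n → Fin n → Bool) (i j m : Fin n) : Decidable (LeftOf σ i j m) :=
  inferInstanceAs (Decidable (_ ∨ _))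

theorem Ek_eq_card (σ : Fin n → Fin n → Fin n → Bool) (k : ℕ) :
    Ek σ k = (Finset.univ.filter fun p : Fin n × Fin n => p.1 < p.2 ∧
      min (Finset.univ.filter (LeftOf σ p.1 p.2)).card
        (n - 2 - (Finset.univ.filter (LeftOf σ p.1 p.2)).card) = k).card := by
  have hleft : ∀ i j, leftCount σ i j = (Finset.univ.filter (LeftOf σ i j)).card := fun i j => by
    rw [leftCount, ← Set.ncard_coe_finset]; simp
  rw [Ek, ← Set.ncard_coe_finset]
  simp [IsKEdge, hleft]

/-- `Ek` depends only on the signs of increasing triples. -/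
theorem Ek_congr {σ τ : Fin n → Fin n → Fin n → Bool}
    (h : ∀ i j k, i < j → j < k → σ i j k = τ i j k) (k : ℕ) : Ek σ k = Ek τ k := by
  have hleft : ∀ p : Fin n × Fin n, p.1 < p.2 → leftCount σ p.1 p.2 = leftCount τ p.1 p.2 := by
    intro p hp
    have hiff : ∀ m, LeftOf σ p.1 p.2 m ↔ LeftOf τ p.1 p.2 m := fun m => by
      grind [LeftOf]
    simp only [leftCount, hiff]
  have hset : {p : Fin n × Fin n | p.1 < p.2 ∧ IsKEdge σ k p.1 p.2} =
      {p | p.1 < p.2 ∧ IsKEdge τ k p.1 p.2} := by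
    ext p
    simp +contextual [IsKEdge, hleft]
  rw [Ek, Ek, hset]

/-- The signature function on `Fin 4` with the given signs of the four increasing triples. -/
def ofForm (a b c d : Bool) (i j k : Fin 4) : Bool :=
  if i = 1 then d else if j = 2 then c else if k = 3 then b else a

theorem Ek_eq_Ek_ofForm (σ : Fin 4 → Fin 4 → Fin 4 → Bool) (k : ℕ) :
    Ek σ k = Ek (ofForm (σ 0 1 2) (σ 0 1 3) (σ 0 2 3) (σ 1 2 3)) k := by
  refine Ek_congr (fun i j k hij hjk => ?_) k
  have hcases : ∀ i j k : Fin 4, i < j → j < k →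
      (i = 0 ∧ j = 1 ∧ k = 2) ∨ (i = 0 ∧ j = 1 ∧ k = 3) ∨ (i = 0 ∧ j = 2 ∧ k = 3) ∨
        (i = 1 ∧ j = 2 ∧ k = 3) := by decide
  rcases hcases i j k hij hjk with ⟨rfl, rfl, rfl⟩ | ⟨rfl, rfl, rfl⟩ | ⟨rfl, rfl, rfl⟩ |
    ⟨rfl, rfl, rfl⟩ <;> rfl

instance (a b c d : Bool) : Decidable (AllowedForm a b c d) :=
  inferInstanceAs (Decidable (_ ∈ _))

/-- For an allowed form on four vertices, the number of conditions forcing an odd crossing is at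
most one and complements the number of `1`-edges to three. -/
theorem AllowedForm.oddCrossings_add_Ek_one {a b c d : Bool} (h : AllowedForm a b c d) :
    (if a = d then 1 else 0) + (if b ≠ c then 1 else 0) ≤ 1 ∧
      (if a = d then 1 else 0) + (if b ≠ c then 1 else 0) + Ek (ofForm a b c d) 1 = 3 := by
  rw [Ek_eq_card]
  revert a b c d
  decide

end Sig

/-- For every semisimple x-monotone drawing `D` of `K 4`: at most one
pair of edges crosses an odd number of times, and `ocr(D) + E₁(D) = 3`. -/
theorem semisimple_monotone_K4_ocr_le_one_and_E1 (D : XMonotoneDrawing 4)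
    (hD : D.Semisimple) :
    D.ocr ≤ 1 ∧ D.ocr + Sig.Ek D.sig 1 = 3 := by
  have hform := hD.admissible 0 1 2 3 (by decide) (by decide) (by decide)
  rw [hD.ocr_eq, Sig.Ek_eq_Ek_ofForm]
  exact hform.oddCrossings_add_Ek_one
end

section
/- Let D be a semisimple x-monotone drawing of K_n and let k be an integer with 0 ≤ k ≤ (n−3)/2. For every i ∈ {1, 2, ..., k+1}, each of the k+2−i bottommost and each of the k+2−i topmost right edges at v_i is an m-edge of D for some m ≤ k; moreover, at least k+2−i of these edges are (D,D')-invariant ≤k-edges, where D' is the x-monotone drawing of K_{n−1} obtained from D by deleting v_n and its incident edges. -/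
/-- A nowhere vanishing continuous function on a segment has the same sign at both ends. -/
lemma pos_left_iff_pos_right_of_ne_zero {g : ℝ → ℝ} {a b : ℝ} (hab : a ≤ b)
    (hg : ContinuousOn g (Set.Icc a b)) (h0 : ∀ s ∈ Set.Icc a b, g s ≠ 0) :
    0 < g a ↔ 0 < g b := by
  have ha := h0 a (Set.left_mem_Icc.2 hab)
  have hb := h0 b (Set.right_mem_Icc.2 hab)
  constructor
  · intro h
    by_contra hneg
    obtain ⟨s, hs, hs0⟩ := intermediate_value_Icc' hab hg ⟨not_lt.1 hneg, h.le⟩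
    exact h0 s hs hs0
  · intro h
    by_contra hneg
    obtain ⟨s, hs, hs0⟩ := intermediate_value_Icc hab hg ⟨not_lt.1 hneg, h.le⟩
    exact h0 s hs hs0

/-- At least `r` elements of a finite set with at least `r` elements have fewer than `r`
elements of the set above them. -/
lemma le_ncard_setOf_ncard_above_lt {ι α : Type*} [Finite ι] [LinearOrder α] (S : Set ι)
    (f : ι → α) {r : ℕ} (hr : r ≤ S.ncard) :
    r ≤ {j | j ∈ S ∧ {m | m ∈ S ∧ f j < f m}.ncard < r}.ncard := by
  set A := {j | j ∈ S ∧ {m | m ∈ S ∧ f j < f m}.ncard < r} with hA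
  by_contra! hlt
  obtain ⟨j₀, hj₀S, hj₀A⟩ := Set.exists_mem_notMem_of_ncard_lt_ncard (hlt.trans_le hr)
  obtain ⟨j, ⟨hjS, hjA⟩, hmax⟩ :=
    Set.exists_max_image (S \ A) f (Set.toFinite _) ⟨j₀, hj₀S, hj₀A⟩
  refine hjA ⟨hjS, lt_of_le_of_lt (Set.ncard_le_ncard ?_ (Set.toFinite _)) hlt⟩
  rintro m ⟨hmS, hm⟩
  by_contra hmA
  exact (hmax m ⟨hmS, hmA⟩).not_gt hm

namespace XMonotoneDrawing

variable {n : ℕ} {D : XMonotoneDrawing n}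

lemma Semisimple.right_edges_ne (hD : D.Semisimple) {i j m : Fin n} (hij : i < j) (him : i < m)
    (hjm : j ≠ m) {s : ℝ} (hs : D.x i < s) (hsj : s < D.x j) (hsm : s < D.x m) :
    D.e i j s ≠ D.e i m s := by
  intro h
  have hne : (i, j) ≠ (i, m) := by simpa using hjm
  have hempty := (Set.ncard_eq_zero (D.cross_finite i j i m hij him hne)).1
    (hD i j i m hij him hne (Or.inl rfl))
  have hmem : s ∈ (∅ : Set ℝ) := by
    rw [← hempty]
    exact ⟨by simpa using hs, lt_min hsj hsm, h⟩
  exact hmem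

/-- The order of two right edges just after their left endpoint is read off from the position
of the nearer right endpoint. -/
lemma Semisimple.right_edge_lt_iff (hD : D.Semisimple) {i j m : Fin n} (hij : i < j)
    (hjm : j < m) {t : ℝ} (ht : D.x i < t) (htj : t < D.x j) :
    D.e i j t < D.e i m t ↔ 0 < D.e i m (D.x j) := by
  have him := hij.trans hjm
  have hx := D.x_strictMono hjm
  have key := pos_left_iff_pos_right_of_ne_zero (g := fun s => D.e i m s - D.e i j s) htj.le
    (((D.cont i m him).mono (Set.Icc_subset_Icc ht.le hx.le)).sub
      ((D.cont i j hij).mono (Set.Icc_subset_Icc ht.le le_rfl))) ?_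
  · simpa [D.end_right i j hij] using key
  · rintro s ⟨hts, hsj⟩
    rcases hsj.lt_or_eq with hlt | rfl
    · exact sub_ne_zero.2
        (hD.right_edges_ne hij him hjm.ne (ht.trans_le hts) hlt (hlt.trans hx)).symm
    · simpa [D.end_right i j hij] using D.avoid_vertex i j m hij hjm

/-- A vertex to the right of `v i` is on the left of the right edge `{i, j}` exactly when its
own edge from `v i` starts above `{i, j}`. -/
lemma Semisimple.leftOf_iff (hD : D.Semisimple) {i j m : Fin n} (hij : i < j) (him : i < m)
    (hjm : m ≠ j) {t : ℝ} (ht : D.x i < t) (ht' : ∀ l : Fin n, i < l → t < D.x l) :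
    Sig.LeftOf D.sig i j m ↔ D.e i j t < D.e i m t := by
  rcases hjm.lt_or_gt with h | h
  · have h1 := hD.right_edge_lt_iff him h ht (ht' m him)
    have h2 := hD.right_edges_ne hij him hjm.symm ht (ht' j hij) (ht' m him)
    have h3 : Sig.LeftOf D.sig i j m ↔ ¬ 0 < D.e i j (D.x m) := by
      simp [Sig.LeftOf, XMonotoneDrawing.sig, h, him, him.not_gt, h.not_gt]
    rw [h3, ← h1, not_lt]
    exact ⟨fun h => lt_of_le_of_ne h h2, le_of_lt⟩
  · rw [hD.right_edge_lt_iff hij h ht (ht' j hij)]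
    simp [Sig.LeftOf, XMonotoneDrawing.sig, h, him.not_gt, h.not_gt]

lemma Semisimple.leftCount_le (hD : D.Semisimple) {i j : Fin n} (hij : i < j) {t : ℝ}
    (ht : D.x i < t) (ht' : ∀ l : Fin n, i < l → t < D.x l) :
    Sig.leftCount D.sig i j ≤ {m : Fin n | i < m ∧ D.e i j t < D.e i m t}.ncard + i := by
  have hsub : {m : Fin n | Sig.LeftOf D.sig i j m} ⊆
      {m : Fin n | i < m ∧ D.e i j t < D.e i m t} ∪ Set.Iio i := by
    intro m hm
    rcases lt_trichotomy m i with h | rfl | h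
    · exact Or.inr h
    · simp [Sig.LeftOf, hij.not_gt] at hm
    · refine Or.inl ⟨h, (hD.leftOf_iff hij h ?_ ht ht').1 hm⟩
      rintro rfl
      simp [Sig.LeftOf, hij.not_gt] at hm
  calc _ ≤ _ := Set.ncard_le_ncard hsub (Set.toFinite _)
    _ ≤ _ := Set.ncard_union_le _ _
    _ = _ := by simp [Set.ncard_eq_toFinset_card']

lemma Semisimple.le_leftCount_add (hD : D.Semisimple) {i j : Fin n} (hij : i < j) {t : ℝ}
    (ht : D.x i < t) (ht' : ∀ l : Fin n, i < l → t < D.x l) :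
    n ≤ Sig.leftCount D.sig i j + {m : Fin n | i < m ∧ D.e i m t < D.e i j t}.ncard + i + 2 := by
  have hsub : (Set.univ : Set (Fin n)) ⊆
      (({m : Fin n | Sig.LeftOf D.sig i j m} ∪ {m : Fin n | i < m ∧ D.e i m t < D.e i j t}) ∪
        Set.Iio i) ∪ {i, j} := by
    intro m _
    by_cases hmj : m = j
    · simp [hmj]
    rcases lt_trichotomy m i with h | h | h
    · simp [h]
    · simp [h]
    · rcases (hD.right_edges_ne hij h (Ne.symm hmj) ht (ht' j hij) (ht' m h)).lt_or_gt with h' | h'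
      · exact Or.inl (Or.inl (Or.inl ((hD.leftOf_iff hij h hmj ht ht').2 h')))
      · exact Or.inl (Or.inl (Or.inr ⟨h, h'⟩))
  have h1 := Set.ncard_le_ncard hsub (Set.toFinite _)
  rw [Set.ncard_univ, Nat.card_fin] at h1
  have h2 := Set.ncard_union_le
    (({m : Fin n | Sig.LeftOf D.sig i j m} ∪ {m : Fin n | i < m ∧ D.e i m t < D.e i j t}) ∪
        Set.Iio i) {i, j}
  have h3 := Set.ncard_union_le
    ({m : Fin n | Sig.LeftOf D.sig i j m} ∪ {m : Fin n | i < m ∧ D.e i m t < D.e i j t})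
    (Set.Iio i)
  have h4 := Set.ncard_union_le {m : Fin n | Sig.LeftOf D.sig i j m}
    {m : Fin n | i < m ∧ D.e i m t < D.e i j t}
  have h5 : (Set.Iio i).ncard = i := by simp [Set.ncard_eq_toFinset_card']
  have h6 : ({i, j} : Set (Fin n)).ncard = 2 := Set.ncard_pair hij.ne
  unfold Sig.leftCount
  omega

end XMonotoneDrawing

lemma Sig.leftCountRes_le {n : ℕ} (σ : Fin n → Fin n → Fin n → Bool) (i j : Fin n) :
    leftCountRes σ i j ≤ leftCount σ i j :=
  Set.ncard_le_ncard (fun _ h => h.1) (Set.toFinite _)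

lemma Sig.leftCount_le_leftCountRes_add_one {n : ℕ} (σ : Fin n → Fin n → Fin n → Bool)
    (i j : Fin n) : leftCount σ i j ≤ leftCountRes σ i j + 1 := by
  have hone : {m : Fin n | ¬ (m : ℕ) + 1 < n}.ncard ≤ 1 :=
    (Set.ncard_le_one_iff (Set.toFinite _)).2 fun {a b} ha hb => by
      simp only [Set.mem_ofPred_eq] at ha hb
      exact Fin.ext (by omega)
  have hsub : {m : Fin n | LeftOf σ i j m} ⊆
      {m : Fin n | LeftOf σ i j m ∧ (m : ℕ) + 1 < n} ∪ {m : Fin n | ¬ (m : ℕ) + 1 < n} := by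
    intro m hm
    by_cases h : (m : ℕ) + 1 < n
    · exact Or.inl ⟨hm, h⟩
    · exact Or.inr h
  calc _ ≤ _ := Set.ncard_le_ncard hsub (Set.toFinite _)
    _ ≤ _ := Set.ncard_union_le _ _
    _ ≤ _ := Nat.add_le_add_left hone _

/-- Let `D` be a semisimple x-monotone drawing of `K n` and let `k` be
an integer with `0 ≤ k ≤ (n−3)/2` (i.e. `2k + 3 ≤ n`). For every vertex `i` among the
first `k+1` vertices (0-based: `(i : ℕ) ≤ k`) and every parameter `t` strictly between
`x i` and the `x`-coordinates of all later vertices: each right edge `{i, j}` that is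
among the `k+2−i` (1-based; here `k+1−(i : ℕ)`) topmost or among that many bottommost
right edges at `v i` (measured by the values `e i · t`) is an `m`-edge for some `m ≤ k`;
moreover at least `k+1−(i : ℕ)` of these edges are `(D,D')`-invariant `≤k`-edges, where
`D'` is obtained by deleting the last vertex. -/
theorem topmost_bottommost_right_edges_are_le_k_edges (n : ℕ)
    (D : XMonotoneDrawing n) (hD : D.Semisimple) (k : ℕ) (hk : 2 * k + 3 ≤ n)
    (i : Fin n) (hi : (i : ℕ) ≤ k)
    (t : ℝ) (ht₁ : D.x i < t) (ht₂ : ∀ m : Fin n, i < m → t < D.x m) :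
    (∀ j : Fin n, i < j →
      ({m : Fin n | i < m ∧ D.e i j t < D.e i m t}.ncard < k + 1 - (i : ℕ) ∨
        {m : Fin n | i < m ∧ D.e i m t < D.e i j t}.ncard < k + 1 - (i : ℕ)) →
      ∃ m ≤ k, Sig.IsKEdge D.sig m i j) ∧
    k + 1 - (i : ℕ) ≤
      {j : Fin n | i < j ∧
        ({m : Fin n | i < m ∧ D.e i j t < D.e i m t}.ncard < k + 1 - (i : ℕ) ∨
          {m : Fin n | i < m ∧ D.e i m t < D.e i j t}.ncard < k + 1 - (i : ℕ)) ∧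
        Sig.InvariantLeK D.sig k i j}.ncard := by
  have hleK : ∀ j : Fin n, i < j →
      ({m : Fin n | i < m ∧ D.e i j t < D.e i m t}.ncard < k + 1 - (i : ℕ) ∨
        {m : Fin n | i < m ∧ D.e i m t < D.e i j t}.ncard < k + 1 - (i : ℕ)) →
      Sig.leftCount D.sig i j ≤ k ∨ n - 2 - Sig.leftCount D.sig i j ≤ k := by
    intro j hij h
    have h1 := hD.leftCount_le hij ht₁ ht₂
    have h2 := hD.le_leftCount_add hij ht₁ ht₂
    omega
  have hinv : ∀ j : Fin n, i < j → (j : ℕ) + 1 < n →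
      ({m : Fin n | i < m ∧ D.e i j t < D.e i m t}.ncard < k + 1 - (i : ℕ) ∨
        {m : Fin n | i < m ∧ D.e i m t < D.e i j t}.ncard < k + 1 - (i : ℕ)) →
      Sig.InvariantLeK D.sig k i j := by
    intro j hij hjn h
    have h1 := hleK j hij h
    have h2 := Sig.leftCountRes_le D.sig i j
    have h3 := Sig.leftCount_le_leftCountRes_add_one D.sig i j
    exact ⟨hjn, ⟨_, min_le_iff.2 h1, rfl⟩, ⟨_, min_le_iff.2 (by omega), rfl⟩⟩
  refine ⟨fun j hij h => ⟨_, min_le_iff.2 (hleK j hij h), rfl⟩, ?_⟩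
  have hcard : (Set.Ioi i).ncard = n - 1 - i := by simp [Set.ncard_eq_toFinset_card']
  have htop := le_ncard_setOf_ncard_above_lt (Set.Ioi i) (fun m => D.e i m t)
    (r := k + 1 - (i : ℕ)) (by omega)
  have hbot := le_ncard_setOf_ncard_above_lt (Set.Ioi i) (fun m => OrderDual.toDual (D.e i m t))
    (r := k + 1 - (i : ℕ)) (by omega)
  let w : Fin n := ⟨n - 1, by omega⟩
  have hiw : i < w := Fin.lt_def.2 (by simp only [w]; omega)
  have hlast : ∀ j : Fin n, j ≠ w → (j : ℕ) + 1 < n := by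
    intro j hj
    have := Fin.val_ne_of_ne hj
    simp only [w] at this
    omega
  by_cases hw : {m : Fin n | i < m ∧ D.e i w t < D.e i m t}.ncard < k + 1 - (i : ℕ)
  · have hw' : ¬ {m : Fin n | i < m ∧ D.e i m t < D.e i w t}.ncard < k + 1 - (i : ℕ) := by
      have h1 := hD.leftCount_le hiw ht₁ ht₂
      have h2 := hD.le_leftCount_add hiw ht₁ ht₂
      omega
    refine hbot.trans (Set.ncard_le_ncard ?_ (Set.toFinite _))
    rintro j ⟨hij, hj⟩
    exact ⟨hij, Or.inr hj, hinv j hij (hlast j (by rintro rfl; exact hw' hj)) (Or.inr hj)⟩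
  · refine htop.trans (Set.ncard_le_ncard ?_ (Set.toFinite _))
    rintro j ⟨hij, hj⟩
    exact ⟨hij, Or.inl hj, hinv j hij (hlast j (by rintro rfl; exact hw hj)) (Or.inl hj)⟩
end

section
/- Let D be a semisimple x-monotone drawing of K_n and fix t with x_{n−1} < t < x_n. Then the values e_{1n}(t), e_{2n}(t), ..., e_{(n−1)n}(t) are pairwise distinct; whenever e_{an}(t) > e_{bn}(t) for a ≠ b, one has σ_D(a,b,n) = + if a < b and σ_D(b,a,n) = − if b < a. Consequently, for every k with 1 ≤ k ≤ (n−1)/2, the edge with the k-th largest value e_{in}(t) and the edge with the k-th smallest value e_{in}(t) are each (k−1)-edges of D. -/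
namespace XMonotoneDrawing

variable {n : ℕ}

/-- In a semisimple drawing, edges with a common right endpoint do not meet over the interior
of their common domain. -/
lemma Semisimple.ne_of_common_right {D : XMonotoneDrawing n} (hD : D.Semisimple)
    {a b c : Fin n} (hab : a < b) (hbc : b < c) {s : ℝ} (h₁ : D.x b < s) (h₂ : s < D.x c) :
    D.e a c s ≠ D.e b c s := by
  intro h
  have hac : a < c := hab.trans hbc
  have hne : (a, c) ≠ (b, c) := fun h => hab.ne (congrArg Prod.fst h)
  have h0 := hD a c b c hac hbc hne (Or.inr (Or.inr (Or.inr rfl)))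
  rw [crossCount, crossSet, Set.ncard_eq_zero (D.cross_finite a c b c hac hbc hne)] at h0
  exact Set.eq_empty_iff_forall_notMem.mp h0 s
    ⟨max_lt ((D.x_strictMono hab).trans h₁) h₁, lt_min h₂ h₂, h⟩

/-- In a semisimple drawing, the vertical order of two edges with a common right endpoint `c`
is determined by the signature. -/
lemma Semisimple.lt_iff_sig {D : XMonotoneDrawing n} (hD : D.Semisimple)
    {a b c : Fin n} (hab : a < b) (hbc : b < c) {t : ℝ} (h₁ : D.x b < t) (h₂ : t < D.x c) :
    D.e b c t < D.e a c t ↔ D.sig a b c = true := by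
  have hsub : Set.Icc (D.x b) t ⊆ Set.Icc (D.x b) (D.x c) := Set.Icc_subset_Icc_right h₂.le
  have hcont : ContinuousOn (fun s => D.e a c s - D.e b c s) (Set.Icc (D.x b) t) :=
    ((D.cont a c (hab.trans hbc)).mono
      (hsub.trans (Set.Icc_subset_Icc_left (D.x_strictMono hab).le))).sub
      ((D.cont b c hbc).mono hsub)
  have hb := D.end_left b c hbc
  have hzero : ∀ s ∈ Set.Icc (D.x b) t, D.e a c s - D.e b c s ≠ 0 := by
    intro s hs h
    rcases hs.1.eq_or_lt with rfl | hlt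
    · exact D.avoid_vertex a b c hab hbc (by simpa [hb] using h)
    · exact hD.ne_of_common_right hab hbc hlt (hs.2.trans_lt h₂) (sub_eq_zero.mp h)
  have hsig : D.sig a b c = true ↔ 0 < D.e a c (D.x b) := by simp [sig]
  rw [hsig]
  constructor
  · intro ht
    by_contra hn
    obtain ⟨s, hs, h⟩ := intermediate_value_Icc h₁.le hcont
      (show (0 : ℝ) ∈ Set.Icc _ _ from ⟨by simp only [hb]; linarith, by linarith⟩)
    exact hzero s hs h
  · intro hp
    by_contra hn
    obtain ⟨s, hs, h⟩ := intermediate_value_Icc' h₁.le hcont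
      (show (0 : ℝ) ∈ Set.Icc _ _ from ⟨by linarith, by simp only [hb]; linarith⟩)
    exact hzero s hs h

end XMonotoneDrawing

/-- Let `D` be a semisimple x-monotone drawing of `K (n+1)` and fix `t`
strictly between the `x`-coordinate of the second-to-last vertex and that of the last
vertex. Then the values `e a last t` (over `a ≠ last`) are pairwise distinct; whenever
`e a last t > e b last t` for `a ≠ b`, one has `σ_D a b last = +` if `a < b` and
`σ_D b a last = −` if `b < a`; and for every `k` with `1 ≤ k ≤ n/2` the edge with the
`k`-th largest value and the edge with the `k`-th smallest value are `(k−1)`-edges. -/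
theorem edges_at_last_vertex_k_edges (n : ℕ) (D : XMonotoneDrawing (n + 1))
    (hD : D.Semisimple) (t : ℝ) (ht₂ : t < D.x (Fin.last n))
    (ht₁ : ∀ m : Fin (n + 1), m ≠ Fin.last n → D.x m < t) :
    (∀ a b : Fin (n + 1), a ≠ Fin.last n → b ≠ Fin.last n → a ≠ b →
      D.e a (Fin.last n) t ≠ D.e b (Fin.last n) t) ∧
    (∀ a b : Fin (n + 1), a ≠ Fin.last n → b ≠ Fin.last n → a ≠ b →
      D.e b (Fin.last n) t < D.e a (Fin.last n) t →
      (a < b → D.sig a b (Fin.last n) = true) ∧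
      (b < a → D.sig b a (Fin.last n) = false)) ∧
    (∀ k : ℕ, 1 ≤ k → 2 * k ≤ n → ∀ a : Fin (n + 1), a ≠ Fin.last n →
      ({b : Fin (n + 1) | b ≠ Fin.last n ∧ b ≠ a ∧
          D.e a (Fin.last n) t < D.e b (Fin.last n) t}.ncard = k - 1 ∨
        {b : Fin (n + 1) | b ≠ Fin.last n ∧ b ≠ a ∧
          D.e b (Fin.last n) t < D.e a (Fin.last n) t}.ncard = k - 1) →
      Sig.IsKEdge D.sig (k - 1) a (Fin.last n)) := by
  have hlast : ∀ {m : Fin (n + 1)}, m ≠ Fin.last n → m < Fin.last n := Fin.lt_last_iff_ne_last.mpr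
  have hdist : ∀ a b : Fin (n + 1), a ≠ Fin.last n → b ≠ Fin.last n → a ≠ b →
      D.e a (Fin.last n) t ≠ D.e b (Fin.last n) t := by
    intro a b ha hb hab
    rcases hab.lt_or_gt with h | h
    · exact hD.ne_of_common_right h (hlast hb) (ht₁ b hb) ht₂
    · exact (hD.ne_of_common_right h (hlast ha) (ht₁ a ha) ht₂).symm
  have hiff : ∀ a b : Fin (n + 1), b ≠ Fin.last n → a < b →
      (D.e b (Fin.last n) t < D.e a (Fin.last n) t ↔ D.sig a b (Fin.last n) = true) :=
    fun a b hb hab => hD.lt_iff_sig hab (hlast hb) (ht₁ b hb) ht₂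
  have hiff' : ∀ a b : Fin (n + 1), b ≠ Fin.last n → a < b →
      (D.e a (Fin.last n) t < D.e b (Fin.last n) t ↔ D.sig a b (Fin.last n) = false) := by
    intro a b hb hab
    rw [← Bool.not_eq_true, ← hiff a b hb hab, not_lt]
    exact (hdist a b (hab.trans (hlast hb)).ne hb hab.ne).le_iff_lt.symm
  refine ⟨hdist, fun a b ha hb _ h => ⟨fun hab => (hiff a b hb hab).mp h,
    fun hba => (hiff' b a ha hba).mp h⟩, ?_⟩
  intro k hk hkn a ha hcard
  have hleft : {m : Fin (n + 1) | Sig.LeftOf D.sig a (Fin.last n) m} =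
      {b | b ≠ Fin.last n ∧ b ≠ a ∧ D.e a (Fin.last n) t < D.e b (Fin.last n) t} := by
    ext m
    simp only [Set.mem_ofPred_eq, Sig.LeftOf]
    constructor
    · rintro (⟨h₁, h₂, h₃⟩ | ⟨h₁, h₂⟩ | ⟨h, -⟩)
      · exact ⟨h₂.ne, h₁.ne', (hiff' a m h₂.ne h₁).mpr h₃⟩
      · exact ⟨(h₁.trans (hlast ha)).ne, h₁.ne, (hiff m a ha h₁).mpr h₂⟩
      · exact absurd h (Fin.le_last m).not_gt
    · rintro ⟨hm, hma, h⟩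
      rcases hma.lt_or_gt with h₁ | h₁
      · exact Or.inr (Or.inl ⟨h₁, (hiff m a ha h₁).mp h⟩)
      · exact Or.inl ⟨h₁, hlast hm, (hiff' a m hm h₁).mp h⟩
  have hsum : {b : Fin (n + 1) | b ≠ Fin.last n ∧ b ≠ a ∧
        D.e a (Fin.last n) t < D.e b (Fin.last n) t}.ncard +
      {b : Fin (n + 1) | b ≠ Fin.last n ∧ b ≠ a ∧
        D.e b (Fin.last n) t < D.e a (Fin.last n) t}.ncard = n - 1 := by
    rw [← Set.ncard_union_eq (Set.disjoint_left.mpr fun b h h' => h.2.2.asymm h'.2.2)]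
    have hunion : {b : Fin (n + 1) | b ≠ Fin.last n ∧ b ≠ a ∧
          D.e a (Fin.last n) t < D.e b (Fin.last n) t} ∪
        {b : Fin (n + 1) | b ≠ Fin.last n ∧ b ≠ a ∧
          D.e b (Fin.last n) t < D.e a (Fin.last n) t} = {Fin.last n, a}ᶜ := by
      ext b
      simp only [Set.mem_union, Set.mem_ofPred_eq, Set.mem_compl_iff, Set.mem_insert_iff,
        Set.mem_singleton_iff, not_or]
      constructor
      · rintro (h | h) <;> exact ⟨h.1, h.2.1⟩
      · rintro ⟨hb, hba⟩
        exact (hdist a b ha hb (Ne.symm hba)).lt_or_gt.imp (⟨hb, hba, ·⟩) (⟨hb, hba, ·⟩)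
    rw [hunion, Set.ncard_compl, Set.ncard_pair ha.symm, Nat.card_eq_fintype_card,
      Fintype.card_fin]
    omega
  rw [Sig.IsKEdge, Sig.leftCount, hleft]
  omega
end
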